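/- arXiv:2506.14033 — 2 statements merged into one kernel-verified Lean document; each statement's English description precedes it below -/
import Mathlib

section
/- With the notation of the context, given C > 0 there exists k₀ > 0 such that for every multi-index α ∈ ℕ₀ⁿ and every ℓ ∈ ℕ₀ there is a constant C_{α,ℓ} > 0 with |∂_x^α (∂/∂s)^ℓ B_k(x,s)| ≤ C_{α,ℓ}·k^ℓ for all k ≥ k₀, all x ∈ U and all s with 0 ≤ s ≤ C·k^{-2}. -/
open Set Topology

/-- Small balls intersect the set in a convex set. -/
def LocConv {E : Type} [NormedAddCommGroup E] [NormedSpace ℝ E] (S : Set E) : Prop :=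
  ∀ p ∈ S, ∃ r > (0:ℝ), Convex ℝ (Metric.ball p r ∩ S)

section
variable {E F : Type} [NormedAddCommGroup E] [NormedSpace ℝ E]
  [NormedAddCommGroup F] [NormedSpace ℝ F]

lemma slice_hasFDeriv {S : Set E} {a b : ℝ} {f : E × ℝ → F}
    (hf : ContDiffOn ℝ (⊤ : ℕ∞) f (S ×ˢ Icc a b)) {p : E} (hp : p ∈ S) {t : ℝ}
    (ht : t ∈ Icc a b) :
    HasFDerivWithinAt (fun q => f (q, t))
      ((fderivWithin ℝ f (S ×ˢ Icc a b) (p, t)).comp (ContinuousLinearMap.inl ℝ E ℝ)) S p := by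
  have h1 : HasFDerivWithinAt f (fderivWithin ℝ f (S ×ˢ Icc a b) (p, t)) (S ×ˢ Icc a b) (p, t) :=
    ((hf.differentiableOn (by simp)) (p, t) ⟨hp, ht⟩).hasFDerivWithinAt
  have h2 : HasFDerivWithinAt (fun q : E => (q, t)) (ContinuousLinearMap.inl ℝ E ℝ) S p :=
    (hasFDerivAt_prodMk_left p t).hasFDerivWithinAt
  exact HasFDerivWithinAt.comp p h1 h2
    (fun q hq => (⟨hq, ht⟩ : (q, t) ∈ S ×ˢ Icc a b))

lemma slice_contDiff {S : Set E} (hS : UniqueDiffOn ℝ S) {a b : ℝ} (hab : a < b) {f : E × ℝ → F}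
    (hf : ContDiffOn ℝ (⊤ : ℕ∞) f (S ×ˢ Icc a b)) :
    ContDiffOn ℝ (⊤ : ℕ∞) (fun z => (fderivWithin ℝ f (S ×ˢ Icc a b) z).comp
      (ContinuousLinearMap.inl ℝ E ℝ)) (S ×ˢ Icc a b) := by
  have h := hf.fderivWithin (m := (⊤ : ℕ∞)) (hS.prod (uniqueDiffOn_Icc hab)) (by simp)
  exact h.clm_comp contDiffOn_const

lemma int_hasFDeriv [CompleteSpace F] {S : Set E} (hS : UniqueDiffOn ℝ S) (hL : LocConv S)
    {a b : ℝ} (hab : a < b) {f : E × ℝ → F}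
    (hf : ContDiffOn ℝ (⊤ : ℕ∞) f (S ×ˢ Icc a b)) {p : E} (hp : p ∈ S) :
    HasFDerivWithinAt (fun q => ∫ t in a..b, f (q, t))
      (∫ t in a..b, (fderivWithin ℝ f (S ×ˢ Icc a b) (p, t)).comp
        (ContinuousLinearMap.inl ℝ E ℝ)) S p := by
  set D : E → ℝ → (E →L[ℝ] F) := fun q t => (fderivWithin ℝ f (S ×ˢ Icc a b) (q, t)).comp
        (ContinuousLinearMap.inl ℝ E ℝ) with hD
  have hDc : ContinuousOn (Function.uncurry D) (S ×ˢ Icc a b) :=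
    (slice_contDiff hS hab hf).continuousOn
  have hfi : ∀ q ∈ S, IntervalIntegrable (fun t => f (q, t)) MeasureTheory.volume a b := by
    intro q hq
    apply ContinuousOn.intervalIntegrable_of_Icc hab.le
    exact hf.continuousOn.comp (by fun_prop) (fun t ht => ⟨hq, ht⟩)
  have hDi : IntervalIntegrable (fun t => D p t) MeasureTheory.volume a b := by
    apply ContinuousOn.intervalIntegrable_of_Icc hab.le
    exact hDc.comp (f := fun t => (p, t)) (by fun_prop) (fun t ht => ⟨hp, ht⟩)
  refine HasFDerivWithinAt.of_isLittleO ?_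
  rw [Asymptotics.isLittleO_iff]
  intro ε hε
  have hε' : 0 < ε / (b - a) := div_pos hε (sub_pos.2 hab)
  obtain ⟨v, hv, hvb⟩ := isCompact_Icc.mem_uniformity_of_prod hDc hp (Metric.dist_mem_uniformity hε')
  obtain ⟨r, hr, hrv⟩ := Metric.mem_nhdsWithin_iff.1 hv
  obtain ⟨r', hr', hconv⟩ := hL p hp
  have hconv2 : Convex ℝ (Metric.ball p (min r r') ∩ S) := by
    have : Metric.ball p (min r r') ∩ S = Metric.ball p (min r r') ∩ (Metric.ball p r' ∩ S) := by
      ext z; simp only [mem_inter_iff, Metric.mem_ball, lt_min_iff]; tauto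
    rw [this]; exact (convex_ball _ _).inter hconv
  have hmem : Metric.ball p (min r r') ∩ S ∈ 𝓝[S] p :=
    Filter.inter_mem (mem_nhdsWithin_of_mem_nhds (Metric.ball_mem_nhds _ (lt_min hr hr')))
      self_mem_nhdsWithin
  filter_upwards [hmem] with q hq
  have hpm : p ∈ Metric.ball p (min r r') ∩ S := ⟨Metric.mem_ball_self (lt_min hr hr'), hp⟩
  have e1 : (∫ t in a..b, D p t) (q - p) = ∫ t in a..b, D p t (q - p) :=
    ContinuousLinearMap.intervalIntegral_apply hDi _
  have hDi' : IntervalIntegrable (fun t => D p t (q - p)) MeasureTheory.volume a b := by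
    apply ContinuousOn.intervalIntegrable_of_Icc hab.le
    exact (hDc.comp (f := fun t => (p, t)) (by fun_prop) (fun t ht => ⟨hp, ht⟩)).clm_apply
      continuousOn_const
  rw [e1, ← intervalIntegral.integral_sub (hfi q hq.2) (hfi p hp),
    ← intervalIntegral.integral_sub ((hfi q hq.2).sub (hfi p hp)) hDi']
  have key : ∀ t ∈ uIoc a b, ‖f (q, t) - f (p, t) - D p t (q - p)‖ ≤ ε / (b - a) * ‖q - p‖ := by
    intro t ht
    rw [uIoc_of_le hab.le] at ht
    have ht' : t ∈ Icc a b := ⟨ht.1.le, ht.2⟩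
    refine hconv2.norm_image_sub_le_of_norm_hasFDerivWithin_le' (f := fun q => f (q, t))
      (f' := fun q => D q t) (φ := D p t) (fun z hz => ?_) (fun z hz => ?_) hpm hq
    · exact (slice_hasFDeriv hf hz.2 ht').mono inter_subset_right
    · have := hvb z (hrv ⟨Metric.ball_subset_ball (min_le_left _ _) hz.1, hz.2⟩) t ht'
      simp only [mem_ofPred_eq, dist_eq_norm] at this
      exact this.le
  refine (intervalIntegral.norm_integral_le_of_norm_le_const key).trans ?_
  rw [abs_of_pos (sub_pos.2 hab)]
  have := (sub_pos.2 hab).ne'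
  apply le_of_eq; field_simp

end

lemma int_contDiff {E : Type} [NormedAddCommGroup E] [NormedSpace ℝ E] {S : Set E}
    (hS : UniqueDiffOn ℝ S) (hL : LocConv S) {a b : ℝ} (hab : a < b) (m : ℕ) :
    ∀ (F : Type) [NormedAddCommGroup F] [NormedSpace ℝ F] [CompleteSpace F] (f : E × ℝ → F),
    ContDiffOn ℝ (⊤ : ℕ∞) f (S ×ˢ Icc a b) →
    ContDiffOn ℝ m (fun q => ∫ t in a..b, f (q, t)) S := by
  induction m with
  | zero =>
    intro F _ _ _ f hf
    have : ContinuousOn (fun q => ∫ t in a..b, f (q, t)) S :=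
      fun q hq => (int_hasFDeriv hS hL hab hf hq).continuousWithinAt
    simpa using this
  | succ m ih =>
    intro F _ _ _ f hf
    have := (contDiffOn_succ_iff_hasFDerivWithinAt_of_uniqueDiffOn (𝕜 := ℝ) (n := (m : WithTop ℕ∞))
      (f := fun q => ∫ t in a..b, f (q, t)) hS).2
      ⟨by simp, _, ih _ _ (slice_contDiff hS hab hf), fun x hx => int_hasFDeriv hS hL hab hf hx⟩
    exact_mod_cast this

lemma int_bound {E : Type} [NormedAddCommGroup E] [NormedSpace ℝ E] {S : Set E}
    (hS : UniqueDiffOn ℝ S) (hL : LocConv S) {a b : ℝ} (hab : a < b) (m : ℕ) :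
    ∀ (F : Type) [NormedAddCommGroup F] [NormedSpace ℝ F] [CompleteSpace F] (f : E × ℝ → F),
    ContDiffOn ℝ (⊤ : ℕ∞) f (S ×ˢ Icc a b) → ∀ (p : E), p ∈ S → ∀ M : ℝ,
    (∀ t ∈ Icc a b, ‖iteratedFDerivWithin ℝ m f (S ×ˢ Icc a b) (p, t)‖ ≤ M) →
    ‖iteratedFDerivWithin ℝ m (fun q => ∫ t in a..b, f (q, t)) S p‖ ≤ M * (b - a) := by
  have hT : UniqueDiffOn ℝ (S ×ˢ Icc a b) := hS.prod (uniqueDiffOn_Icc hab)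
  induction m with
  | zero =>
    intro F _ _ _ f hf p hp M hM
    simp only [norm_iteratedFDerivWithin_zero] at hM ⊢
    have := intervalIntegral.norm_integral_le_of_norm_le_const (a := a) (b := b)
      (f := fun t => f (p, t)) (C := M)
      (fun t ht => hM t (by rw [uIoc_of_le hab.le] at ht; exact ⟨ht.1.le, ht.2⟩))
    rwa [abs_of_pos (sub_pos.2 hab)] at this
  | succ m ih =>
    intro F _ _ _ f hf p hp M hM
    rw [← norm_iteratedFDerivWithin_fderivWithin hS hp]
    have hc : EqOn (fderivWithin ℝ (fun q => ∫ t in a..b, f (q, t)) S)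
      (fun q => ∫ t in a..b, (fderivWithin ℝ f (S ×ˢ Icc a b) (q, t)).comp
        (ContinuousLinearMap.inl ℝ E ℝ)) S :=
      fun q hq => (int_hasFDeriv hS hL hab hf hq).fderivWithin (hS q hq)
    rw [iteratedFDerivWithin_congr hc hp]
    refine ih _ _ (slice_contDiff hS hab hf) p hp M (fun t ht => ?_)
    have h := hf.fderivWithin (m := (⊤ : ℕ∞)) hT (by simp)
    let L : ((E × ℝ) →L[ℝ] F) →L[ℝ] (E →L[ℝ] F) :=
      (ContinuousLinearMap.compL ℝ E (E × ℝ) F).flip (ContinuousLinearMap.inl ℝ E ℝ)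
    have hLn : ‖L‖ ≤ 1 := by
      refine ContinuousLinearMap.opNorm_le_bound _ zero_le_one (fun A => ?_)
      rw [one_mul]
      refine (ContinuousLinearMap.opNorm_comp_le A _).trans ?_
      exact mul_le_of_le_one_right (norm_nonneg _) (ContinuousLinearMap.norm_inl_le_one ℝ E ℝ)
    have h2 := L.norm_iteratedFDerivWithin_comp_left (n := m) (h (p, t) ⟨hp, ht⟩) hT
      (x := (p, t)) ⟨hp, ht⟩ (by exact_mod_cast le_top)
    refine h2.trans ?_
    rw [norm_iteratedFDerivWithin_fderivWithin hT ⟨hp, ht⟩]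
    exact (mul_le_of_le_one_left (norm_nonneg _) hLn).trans (hM t ht)

lemma locConv_prod {n : ℕ} {V : Set (Fin n → ℝ)} (hV : IsOpen V) (d : ℝ) :
    LocConv (V ×ˢ Ico (0:ℝ) d) := by
  rintro ⟨x, s⟩ ⟨hx, hs⟩
  obtain ⟨r, hr, hrV⟩ := Metric.isOpen_iff.1 hV x hx
  refine ⟨r, hr, ?_⟩
  have : Metric.ball (x, s) r ∩ V ×ˢ Ico (0:ℝ) d = Metric.ball (x, s) r ∩ univ ×ˢ Ico (0:ℝ) d := by
    ext ⟨y, u⟩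
    constructor
    · rintro ⟨h1, h2⟩; exact ⟨h1, trivial, h2.2⟩
    · rintro ⟨h1, h2⟩
      refine ⟨h1, hrV ?_, h2.2⟩
      rw [← ball_prod_same] at h1
      exact h1.1
  rw [this]
  exact (convex_ball _ _).inter (convex_univ.prod (convex_Ico _ _))

/-- Family of smooth functions with uniformly bounded derivatives at the points of `P`. -/
def UB {ι E F : Type} [NormedAddCommGroup E] [NormedSpace ℝ E]
    [NormedAddCommGroup F] [NormedSpace ℝ F] (S : ι → Set E) (P : Set E) (f : ι → E → F) : Prop :=
  (∀ k, ContDiffOn ℝ (⊤ : ℕ∞) (f k) (S k)) ∧ ∀ m : ℕ, ∃ M : ℝ, ∀ k, ∀ p ∈ P, ∀ i ≤ m,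
    ‖iteratedFDerivWithin ℝ i (f k) (S k) p‖ ≤ M

section
variable {ι E F G : Type} [NormedAddCommGroup E] [NormedSpace ℝ E]
  [NormedAddCommGroup F] [NormedSpace ℝ F] [NormedAddCommGroup G] [NormedSpace ℝ G]

lemma UB.mk' {S : ι → Set E} {P : Set E} {f : ι → E → F}
    (h1 : ∀ k, ContDiffOn ℝ (⊤ : ℕ∞) (f k) (S k))
    (h2 : ∀ m : ℕ, ∃ M : ℝ, ∀ k, ∀ p ∈ P, ‖iteratedFDerivWithin ℝ m (f k) (S k) p‖ ≤ M) :
    UB S P f := by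
  refine ⟨h1, fun m => ?_⟩
  choose M hM using h2
  refine ⟨∑ i ∈ Finset.range (m + 1), |M i|, fun k p hp i hi => ?_⟩
  refine ((hM i k p hp).trans (le_abs_self _)).trans ?_
  exact Finset.single_le_sum (f := fun i => |M i|) (fun _ _ => abs_nonneg _)
    (Finset.mem_range.2 (by omega))

lemma UB.of_compact {S P : Set E} (hS : UniqueDiffOn ℝ S) (hP : IsCompact P) (hPS : P ⊆ S)
    {f : E → F} (hf : ContDiffOn ℝ (⊤ : ℕ∞) f S) : UB (fun _ : ι => S) P (fun _ => f) := by
  refine UB.mk' (fun _ => hf) (fun m => ?_)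
  have hc := (hf.continuousOn_iteratedFDerivWithin (m := m) (by exact_mod_cast le_top) hS).mono hPS
  obtain ⟨M, hM⟩ := hP.exists_bound_of_continuousOn hc
  exact ⟨M, fun _ => hM⟩

lemma UB.comp {S : ι → Set E} {P : Set E} {T : ι → Set F} {Q : Set F} {g : ι → F → G}
    {f : ι → E → F} (hg : UB T Q g) (hf : UB S P f) (hT : ∀ k, UniqueDiffOn ℝ (T k))
    (hS : ∀ k, UniqueDiffOn ℝ (S k)) (hP : ∀ k, P ⊆ S k) (hm : ∀ k, MapsTo (f k) (S k) (T k))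
    (hm' : ∀ k, MapsTo (f k) P Q) : UB S P (fun k p => g k (f k p)) := by
  refine UB.mk' (fun k => (hg.1 k).comp (hf.1 k) (hm k)) (fun m => ?_)
  obtain ⟨M, hM⟩ := hg.2 m
  obtain ⟨D, hD⟩ := hf.2 m
  refine ⟨m.factorial * M * (max 1 D) ^ m, fun k p hp => ?_⟩
  refine norm_iteratedFDerivWithin_comp_le (hg.1 k) (hf.1 k) (by exact_mod_cast le_top)
    (hT k) (hS k) (hm k) (hP k hp) (fun i hi => hM k _ (hm' k hp) i hi) (fun i hi hi' => ?_)
  refine (hD k p hp i hi').trans ((le_max_right 1 D).trans ?_)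
  exact le_self_pow₀ (le_max_left _ _) (by omega)

lemma UB.mul {S : ι → Set E} {P : Set E} {f g : ι → E → ℂ} (hf : UB S P f) (hg : UB S P g)
    (hS : ∀ k, UniqueDiffOn ℝ (S k)) (hP : ∀ k, P ⊆ S k) : UB S P (fun k p => f k p * g k p) := by
  refine UB.mk' (fun k => (hf.1 k).mul (hg.1 k)) (fun m => ?_)
  obtain ⟨M, hM⟩ := hf.2 m
  obtain ⟨N, hN⟩ := hg.2 m
  refine ⟨∑ i ∈ Finset.range (m + 1), (m.choose i : ℝ) * M * N, fun k p hp => ?_⟩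
  refine (norm_iteratedFDerivWithin_mul_le (hf.1 k) (hg.1 k) (hS k) (hP k hp)
    (by exact_mod_cast le_top)).trans ?_
  refine Finset.sum_le_sum fun i hi => ?_
  have h1 := hM k p hp i (by have := Finset.mem_range.1 hi; omega)
  have h2 := hN k p hp (m - i) (by omega)
  have h0 : 0 ≤ M := (norm_nonneg _).trans h1
  gcongr

lemma UB.add {S : ι → Set E} {P : Set E} {f g : ι → E → F} (hf : UB S P f) (hg : UB S P g)
    (hS : ∀ k, UniqueDiffOn ℝ (S k)) (hP : ∀ k, P ⊆ S k) : UB S P (fun k p => f k p + g k p) := by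
  refine UB.mk' (fun k => (hf.1 k).add (hg.1 k)) (fun m => ?_)
  obtain ⟨M, hM⟩ := hf.2 m
  obtain ⟨N, hN⟩ := hg.2 m
  refine ⟨M + N, fun k p hp => ?_⟩
  have := fun_iteratedFDerivWithin_add_apply (i := m) (x := p)
    (((hf.1 k) p (hP k hp)).of_le (by exact_mod_cast le_top))
    (((hg.1 k) p (hP k hp)).of_le (by exact_mod_cast le_top)) (hS k) (hP k hp)
  rw [this]
  exact (norm_add_le _ _).trans (add_le_add (hM k p hp m le_rfl) (hN k p hp m le_rfl))

lemma UB.clm {S : ι → Set E} {P : Set E} (L : ι → E →L[ℝ] F) (M : ℝ) (hL : ∀ k, ‖L k‖ ≤ M)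
    (hS : ∀ k, UniqueDiffOn ℝ (S k)) (hP : ∀ k, P ⊆ S k) (hPc : IsCompact P) :
    UB S P (fun k p => L k p) := by
  refine UB.mk' (fun k => (L k).contDiff.contDiffOn) (fun m => ?_)
  rcases m with _ | m
  · obtain ⟨R, hR⟩ := hPc.isBounded.exists_norm_le
    refine ⟨M * R, fun k p hp => ?_⟩
    rw [norm_iteratedFDerivWithin_zero]
    refine ((L k).le_opNorm p).trans ?_
    have := hR p hp
    have h2 := hL k
    have h0 : 0 ≤ M := (norm_nonneg _).trans h2
    gcongr
  · refine ⟨M, fun k p hp => ?_⟩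
    rw [← norm_iteratedFDerivWithin_fderivWithin (hS k) (hP k hp)]
    have hc : EqOn (fderivWithin ℝ (fun p => L k p) (S k)) (fun _ => L k) (S k) :=
      fun q hq => (L k).fderivWithin (hS k q hq)
    rw [iteratedFDerivWithin_congr hc (hP k hp)]
    rcases m with _ | m
    · rw [norm_iteratedFDerivWithin_zero]; exact hL k
    · rw [iteratedFDerivWithin_succ_const]
      simpa using (norm_nonneg _).trans (hL k)

end

/-- The Hadamard lemma. -/
lemma hadamard {n : ℕ} {V : Set (Fin n → ℝ)} (hV : IsOpen V) {d : ℝ}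
    {T : (Fin n → ℝ) × ℝ → ℂ} (hT0 : ∀ x ∈ V, T (x, 0) = 0)
    (hT : ContDiffOn ℝ (⊤ : ℕ∞) T (V ×ˢ Ico (0:ℝ) d)) :
    ∃ h : (Fin n → ℝ) × ℝ → ℂ, ContDiffOn ℝ (⊤ : ℕ∞) h (V ×ˢ Ico (0:ℝ) d) ∧
      ∀ x ∈ V, ∀ s ∈ Ico (0:ℝ) d, T (x, s) = (s : ℂ) * h (x, s) := by
  have hS : UniqueDiffOn ℝ (V ×ˢ Ico (0:ℝ) d) := hV.uniqueDiffOn.prod (uniqueDiffOn_Ico 0 d)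
  set S := V ×ˢ Ico (0:ℝ) d with hSdef
  let f : ((Fin n → ℝ) × ℝ) × ℝ → ℂ := fun z => fderivWithin ℝ T S (z.1.1, z.2 * z.1.2) (0, 1)
  have hmaps : MapsTo (fun z : ((Fin n → ℝ) × ℝ) × ℝ => (z.1.1, z.2 * z.1.2))
      (S ×ˢ Icc (0:ℝ) 1) S := by
    rintro ⟨⟨x, s⟩, u⟩ ⟨⟨hx, hs⟩, hu⟩
    refine ⟨hx, mul_nonneg hu.1 hs.1, ?_⟩
    exact lt_of_le_of_lt (mul_le_of_le_one_left hs.1 hu.2) hs.2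
  have hf : ContDiffOn ℝ (⊤ : ℕ∞) f (S ×ˢ Icc (0:ℝ) 1) := by
    have h1 := hT.fderivWithin (m := (⊤ : ℕ∞)) hS (by simp)
    have h2 := h1.comp (f := fun z : ((Fin n → ℝ) × ℝ) × ℝ => (z.1.1, z.2 * z.1.2))
      (s := S ×ˢ Icc (0:ℝ) 1) (by fun_prop) hmaps
    exact h2.clm_apply contDiffOn_const
  refine ⟨fun q => ∫ u in (0:ℝ)..1, f (q, u), ?_, ?_⟩
  · exact contDiffOn_infty.2
      (fun m => int_contDiff hS (locConv_prod hV d) zero_lt_one m ℂ f hf)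
  · intro x hx s hs
    have hder : ∀ u ∈ Icc (0:ℝ) 1, HasDerivWithinAt (fun u => T (x, u * s)) (s * f ((x, s), u))
        (Icc 0 1) u := by
      intro u hu
      have h1 := ((hT.differentiableOn (by simp)) (x, u * s)
        (hmaps (x := ((x, s), u)) ⟨⟨hx, hs⟩, hu⟩)).hasFDerivWithinAt
      have h2 : HasDerivWithinAt (fun u : ℝ => (x, u * s)) ((0 : Fin n → ℝ), s) (Icc 0 1) u := by
        have := ((hasDerivAt_id u).mul_const s).hasDerivWithinAt (s := Icc 0 1)
        simpa using (hasDerivWithinAt_const u (Icc (0:ℝ) 1) x).prodMk this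
      have h3 := h1.comp_hasDerivWithinAt u h2
        (fun v hv => hmaps (x := ((x, s), v)) ⟨⟨hx, hs⟩, hv⟩)
      have h4 : ((0 : Fin n → ℝ), s) = s • ((0 : Fin n → ℝ), (1:ℝ)) := by simp
      have h5 : (fderivWithin ℝ T S (x, u * s)) (0, s) = s * f ((x, s), u) := by
        rw [h4, map_smul]
        simp [f]
      rw [h5] at h3
      exact h3
    have hint := intervalIntegral.integral_eq_sub_of_hasDerivAt_of_le (zero_le_one (α := ℝ))
      (f := fun u => T (x, u * s)) (f' := fun u => s * f ((x, s), u))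
      (fun u hu => (hder u hu).continuousWithinAt)
      (fun u hu => (hder u ⟨hu.1.le, hu.2.le⟩).hasDerivAt (Icc_mem_nhds hu.1 hu.2))
      (by
        apply ContinuousOn.intervalIntegrable_of_Icc zero_le_one
        refine continuousOn_const.mul ?_
        exact hf.continuousOn.comp (by fun_prop) (fun u hu => ⟨⟨hx, hs⟩, hu⟩))
    rw [intervalIntegral.integral_const_mul] at hint
    simpa [hT0 x hx] using hint.symm

/-- Iterated one-sided `s`-derivatives of a rescaled function. -/
lemma iter_deriv_rescale {n : ℕ} {V : Set (Fin n → ℝ)} (hV : IsOpen V) {d k : ℝ}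
    (hk : 0 < k) {F : (Fin n → ℝ) × ℝ → ℂ}
    (hF : ContDiffOn ℝ (⊤ : ℕ∞) F (V ×ˢ Ico (0:ℝ) (d * k))) {g : ℝ → ℂ} {y : Fin n → ℝ}
    (hy : y ∈ V) (hg : ∀ s ∈ Ico (0:ℝ) d, g s = F (y, k * s)) (l : ℕ) :
    ∀ s ∈ Ico (0:ℝ) d, iteratedDerivWithin l g (Ici 0) s =
      (k ^ l : ℝ) • iteratedFDerivWithin ℝ l F (V ×ˢ Ico (0:ℝ) (d * k)) (y, k * s)
        (fun _ => (0, 1)) := by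
  have hS : UniqueDiffOn ℝ (V ×ˢ Ico (0:ℝ) (d * k)) := hV.uniqueDiffOn.prod (uniqueDiffOn_Ico _ _)
  set S := V ×ˢ Ico (0:ℝ) (d * k) with hSdef
  have hmem : ∀ s ∈ Ico (0:ℝ) d, (y, k * s) ∈ S := by
    intro s hs
    refine ⟨hy, mul_nonneg hk.le hs.1, ?_⟩
    simp only
    nlinarith [hs.2]
  induction l with
  | zero => intro s hs; simp [hg s hs]
  | succ l ih =>
    intro s hs
    rw [iteratedDerivWithin_succ]
    have hnhds : Ico (0:ℝ) d ∈ 𝓝[Ici 0] s := by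
      have : Ico (0:ℝ) d = Ici 0 ∩ Iio d := rfl
      rw [this]
      exact Filter.inter_mem self_mem_nhdsWithin (mem_nhdsWithin_of_mem_nhds (Iio_mem_nhds hs.2))
    have hev : iteratedDerivWithin l g (Ici 0) =ᶠ[𝓝[Ici 0] s] fun s =>
        (k ^ l : ℝ) • iteratedFDerivWithin ℝ l F S (y, k * s) (fun _ => (0, 1)) := by
      filter_upwards [hnhds] with u hu using ih u hu
    rw [hev.derivWithin_eq (ih s hs)]
    have h1 := (hF.differentiableOn_iteratedFDerivWithin (m := l)
      (by exact_mod_cast WithTop.coe_lt_top _) hS (y, k * s) (hmem s hs)).hasFDerivWithinAt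
    have h2 : HasDerivWithinAt (fun u : ℝ => (y, k * u)) ((0 : Fin n → ℝ), k) (Ico 0 d) s := by
      have := ((hasDerivAt_id s).const_mul k).hasDerivWithinAt (s := Ico 0 d)
      simpa using (hasDerivWithinAt_const s (Ico (0:ℝ) d) y).prodMk this
    have h3 := h1.comp_hasDerivWithinAt s h2 hmem
    have h4 := ((ContinuousMultilinearMap.apply ℝ (fun _ : Fin l => (Fin n → ℝ) × ℝ) ℂ
      (fun _ => (0, 1))).hasFDerivAt.comp_hasDerivWithinAt s h3).const_smul (k ^ l : ℝ)
    have h5 := (h4.mono_of_mem_nhdsWithin hnhds).derivWithin (uniqueDiffOn_Ici 0 s hs.1)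
    refine h5.trans ?_
    rw [iteratedFDerivWithin_succ_apply_left]
    have h6 : ((0 : Fin n → ℝ), k) = k • ((0 : Fin n → ℝ), (1:ℝ)) := by simp
    rw [h6, map_smul, map_smul, smul_smul, pow_succ]
    rfl

lemma norm_iter_iter {E F : Type} [NormedAddCommGroup E] [NormedSpace ℝ E]
    [NormedAddCommGroup F] [NormedSpace ℝ F] {S : Set E} (hS : UniqueDiffOn ℝ S) {x : E}
    (hx : x ∈ S) (f : E → F) (l : ℕ) : ∀ j : ℕ,
    ‖iteratedFDerivWithin ℝ j (iteratedFDerivWithin ℝ l f S) S x‖ =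
      ‖iteratedFDerivWithin ℝ (j + l) f S x‖ := by
  induction l with
  | zero =>
    intro j
    have : iteratedFDerivWithin ℝ 0 f S =
        (continuousMultilinearCurryFin0 ℝ E F).symm ∘ f := by
      ext z; simp
    rw [this, LinearIsometryEquiv.norm_iteratedFDerivWithin_comp_left _ _ hS hx]
    rfl
  | succ l ih =>
    intro j
    have : iteratedFDerivWithin ℝ (l + 1) f S =
        (continuousMultilinearCurryLeftEquiv ℝ (fun _ : Fin (l + 1) => E) F).symm ∘
          fderivWithin ℝ (iteratedFDerivWithin ℝ l f S) S := iteratedFDerivWithin_succ_eq_comp_left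
    have h := (continuousMultilinearCurryLeftEquiv ℝ
      (fun _ : Fin (l + 1) => E) F).symm.norm_iteratedFDerivWithin_comp_left
      (fderivWithin ℝ (iteratedFDerivWithin ℝ l f S) S) hS hx j
    rw [this]
    refine h.trans ?_
    refine (norm_iteratedFDerivWithin_fderivWithin hS hx).trans ?_
    rw [ih, show j + 1 + l = j + (l + 1) by omega]

lemma final_bound {ι : Type} {n : ℕ} {V : Set (Fin n → ℝ)} (hV : IsOpen V) {d : ι → ℝ}
    {K : Set (Fin n → ℝ)} {R : ℝ} (hKV : K ⊆ V) (hR : ∀ k, R < d k)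
    {F : ι → (Fin n → ℝ) × ℝ → ℂ}
    (hF : UB (fun k => V ×ˢ Ico (0:ℝ) (d k)) (K ×ˢ Icc (0:ℝ) R) F) (i l : ℕ) :
    ∃ M : ℝ, ∀ k, ∀ x ∈ K, ∀ σ ∈ Icc (0:ℝ) R,
      ‖iteratedFDerivWithin ℝ i (fun y => iteratedFDerivWithin ℝ l (F k)
        (V ×ˢ Ico (0:ℝ) (d k)) (y, σ) (fun _ => (0, 1))) V x‖ ≤ M := by
  obtain ⟨M, hM⟩ := hF.2 (i + l)
  let L := (ContinuousMultilinearMap.apply ℝ (fun _ : Fin l => (Fin n → ℝ) × ℝ) ℂ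
      (fun _ => (0, 1)))
  refine ⟨i.factorial * (‖L‖ * M) * 1 ^ i, fun k x hx σ hσ => ?_⟩
  have hS : UniqueDiffOn ℝ (V ×ˢ Ico (0:ℝ) (d k)) := hV.uniqueDiffOn.prod (uniqueDiffOn_Ico _ _)
  have hp : (x, σ) ∈ V ×ˢ Ico (0:ℝ) (d k) := ⟨hKV hx, hσ.1, hσ.2.trans_lt (hR k)⟩
  have hD : ContDiffOn ℝ (⊤ : ℕ∞) (iteratedFDerivWithin ℝ l (F k) (V ×ˢ Ico (0:ℝ) (d k)))
      (V ×ˢ Ico (0:ℝ) (d k)) := by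
    refine contDiffOn_infty.2 fun m q hq => ?_
    refine (hF.1 k q hq).iteratedFDerivWithin_right hS ?_ hq
    exact_mod_cast le_top
  refine norm_iteratedFDerivWithin_comp_le (N := (⊤ : ℕ∞))
    (g := fun q => L (iteratedFDerivWithin ℝ l (F k) (V ×ˢ Ico (0:ℝ) (d k)) q))
    (f := fun y : Fin n → ℝ => (y, σ)) (t := V ×ˢ Ico (0:ℝ) (d k))
    (L.contDiff.comp_contDiffOn hD) (by fun_prop) (by exact_mod_cast le_top) hS hV.uniqueDiffOn
    (fun y hy => ⟨hy, hp.2⟩) (hKV hx) (fun j hj => ?_) (fun j hj hj' => ?_)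
  · refine (L.norm_iteratedFDerivWithin_comp_left (n := j) (hD _ hp) hS hp
      (by exact_mod_cast le_top)).trans ?_
    rw [norm_iter_iter hS hp]
    gcongr
    exact hM k _ ⟨hx, hσ⟩ _ (by omega)
  · rw [one_pow]
    obtain ⟨j, rfl⟩ : ∃ j', j = j' + 1 := ⟨j - 1, by omega⟩
    rw [← norm_iteratedFDerivWithin_fderivWithin hV.uniqueDiffOn (hKV hx)]
    have hc : EqOn (fderivWithin ℝ (fun y : Fin n → ℝ => (y, σ)) V)
        (fun _ => ContinuousLinearMap.inl ℝ (Fin n → ℝ) ℝ) V :=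
      fun q hq => (hasFDerivAt_prodMk_left q σ).hasFDerivWithinAt.fderivWithin
        (hV.uniqueDiffOn q hq)
    rw [iteratedFDerivWithin_congr hc (hKV hx)]
    rcases j with _ | j
    · rw [norm_iteratedFDerivWithin_zero]; exact ContinuousLinearMap.norm_inl_le_one _ _ _
    · rw [iteratedFDerivWithin_succ_const]
      simp

/-- **Statement 2.** With the phase `τ`, amplitudes `a₀, a₁` and
`B_k(x,s) = ∫_{δ₁}^{δ₂} e^{-ktτ(x,s)} (a₀(x,s,t) + a₁(x,s,t,k)) dt` as in the context,
given `C > 0` there is `k₀ > 0` such that for every multi-index `α` (formalized through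
the order `i = |α|` of the full iterated derivative in `x`) and every `ℓ ∈ ℕ` there is
`C_{α,ℓ} > 0` with `|∂_x^α (∂/∂s)^ℓ B_k(x,s)| ≤ C_{α,ℓ} k^ℓ` for all `k ≥ k₀`, `x ∈ U`,
`0 ≤ s ≤ C k⁻²` (the `s`-derivative is taken within `[0,∞)`, up to the boundary). -/
theorem stmt4 {n : ℕ} (hn : 1 ≤ n)
    (U V : Set (Fin n → ℝ)) (hUopen : IsOpen U) (hVopen : IsOpen V)
    (hUcpt : IsCompact (closure U)) (hUV : closure U ⊆ V)
    (c δ₁ δ₂ : ℝ) (hc : 0 < c) (hδ₁ : 0 < δ₁) (hδ : δ₁ < δ₂)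
    (τ : (Fin n → ℝ) → ℝ → ℂ)
    (a₀ : (Fin n → ℝ) → ℝ → ℝ → ℂ)
    (a₁ : (Fin n → ℝ) → ℝ → ℝ → ℝ → ℂ)
    (hτ0 : ∀ x ∈ V, τ x 0 = 0)
    (hτre : ∀ x ∈ V, ∀ s ∈ Ico (0:ℝ) (2*c), 0 ≤ (τ x s).re)
    (hτsmooth : ContDiffOn ℝ (⊤ : ℕ∞) (fun p : (Fin n → ℝ) × ℝ => τ p.1 p.2)
      (V ×ˢ Ico 0 (2*c)))
    (ha₀smooth : ContDiffOn ℝ (⊤ : ℕ∞)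
      (fun p : (Fin n → ℝ) × ℝ × ℝ => a₀ p.1 p.2.1 p.2.2)
      (V ×ˢ Ico 0 (2*c) ×ˢ univ))
    (ha₁smooth : ∀ k : ℝ, 0 < k → ContDiffOn ℝ (⊤ : ℕ∞)
      (fun p : (Fin n → ℝ) × ℝ × ℝ => a₁ p.1 p.2.1 p.2.2 k)
      (V ×ˢ Ico 0 (2*c) ×ˢ univ))
    (ha₁O : ∀ K ⊆ (V ×ˢ Ico (0:ℝ) (2*c) ×ˢ (univ : Set ℝ)), IsCompact K →
      ∀ m : ℕ, ∃ C > (0:ℝ), ∀ i ≤ m, ∀ p ∈ K, ∀ k : ℝ, 1 ≤ k →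
        ‖iteratedFDerivWithin ℝ i
          (fun q : (Fin n → ℝ) × ℝ × ℝ => a₁ q.1 q.2.1 q.2.2 k)
          (V ×ˢ Ico 0 (2*c) ×ˢ univ) p‖ ≤ C / k)
    (B : ℝ → (Fin n → ℝ) → ℝ → ℂ)
    (hB : ∀ k x s, B k x s =
      ∫ t in δ₁..δ₂, Complex.exp (-((k : ℂ) * (t : ℂ)) * τ x s)
        * (a₀ x s t + a₁ x s t k))
    (C : ℝ) (hC : 0 < C) :
    ∃ k₀ > (0:ℝ), ∀ i ℓ : ℕ, ∃ C' > (0:ℝ), ∀ k ≥ k₀, ∀ x ∈ U, ∀ s : ℝ,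
      0 ≤ s → s ≤ C / k^2 →
      ‖iteratedFDeriv ℝ i
        (fun y => iteratedDerivWithin ℓ (fun s' => B k y s') (Ici 0) s) x‖
        ≤ C' * k ^ ℓ := by
  classical
  have hcV : ∀ d : ℝ, UniqueDiffOn ℝ (V ×ˢ Ico (0:ℝ) d) := fun d =>
    hVopen.uniqueDiffOn.prod (uniqueDiffOn_Ico _ _)
  obtain ⟨h, hh, hτh⟩ := hadamard hVopen (T := fun p => τ p.1 p.2) hτ0 hτsmooth
  set k₀ : ℝ := max 1 (C / c) with hk₀
  have hk₀1 : 1 ≤ k₀ := le_max_left _ _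
  have hCc : ∀ k ≥ k₀, C ≤ c * k := fun k hk => by
    have : C / c ≤ k := (le_max_right _ _).trans hk
    rwa [div_le_iff₀' hc] at this
  refine ⟨k₀, by linarith, ?_⟩
  let ι : Type := {k : ℝ // k₀ ≤ k}
  have hι1 : ∀ k : ι, 1 ≤ k.1 := fun k => hk₀1.trans k.2
  have hιC : ∀ k : ι, C ≤ c * k.1 := fun k => hCc k.1 k.2
  let K := closure U
  let W : ι → Set ((Fin n → ℝ) × ℝ) := fun k => V ×ˢ Ico (0:ℝ) (2 * c * k.1)
  let S : ι → Set (((Fin n → ℝ) × ℝ) × ℝ) := fun k => W k ×ˢ Icc δ₁ δ₂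
  let P : Set (((Fin n → ℝ) × ℝ) × ℝ) := (K ×ˢ Icc (0:ℝ) C) ×ˢ Icc δ₁ δ₂
  have hS : ∀ k, UniqueDiffOn ℝ (S k) := fun k => (hcV _).prod (uniqueDiffOn_Icc hδ)
  have hPc : IsCompact P := (hUcpt.prod isCompact_Icc).prod isCompact_Icc
  have hCd : ∀ k : ι, C < 2 * c * k.1 := fun k => by
    have := hιC k; linarith
  have hPS : ∀ k, P ⊆ S k := by
    rintro k ⟨⟨x, σ⟩, t⟩ ⟨⟨hx, hσ⟩, ht⟩
    exact ⟨⟨hUV hx, hσ.1, hσ.2.trans_lt (hCd k)⟩, ht⟩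
  -- rescaling of the interval
  have hres : ∀ (k : ι) (σ : ℝ), σ ∈ Ico (0:ℝ) (2 * c * k.1) → k.1⁻¹ * σ ∈ Ico (0:ℝ) (2 * c) := by
    intro k σ hσ
    have hk : 0 < k.1 := by linarith [hι1 k]
    refine ⟨mul_nonneg (inv_nonneg.2 hk.le) hσ.1, ?_⟩
    rw [inv_mul_lt_iff₀ hk]; linarith [hσ.2]
  have hres' : ∀ (k : ι) (σ : ℝ), σ ∈ Icc (0:ℝ) C → k.1⁻¹ * σ ∈ Icc (0:ℝ) c := by
    intro k σ hσ
    have hk : 0 < k.1 := by linarith [hι1 k]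
    refine ⟨mul_nonneg (inv_nonneg.2 hk.le) hσ.1, ?_⟩
    rw [inv_mul_le_iff₀ hk]; linarith [hσ.2, hιC k]
  let X := Fin n → ℝ
  let A : ι → (X × ℝ) × ℝ →L[ℝ] X × ℝ × ℝ := fun k =>
    ((ContinuousLinearMap.fst ℝ X ℝ).comp (ContinuousLinearMap.fst ℝ (X × ℝ) ℝ)).prod
      ((k.1⁻¹ • (ContinuousLinearMap.snd ℝ X ℝ).comp (ContinuousLinearMap.fst ℝ (X × ℝ) ℝ)).prod
        (ContinuousLinearMap.snd ℝ (X × ℝ) ℝ))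
  have hA : ∀ k x σ t, A k ((x, σ), t) = (x, k.1⁻¹ * σ, t) := fun k x σ t => rfl
  let A' : ι → (X × ℝ) × ℝ →L[ℝ] X × ℝ := fun k =>
    ((ContinuousLinearMap.fst ℝ X ℝ).comp (ContinuousLinearMap.fst ℝ (X × ℝ) ℝ)).prod
      (k.1⁻¹ • (ContinuousLinearMap.snd ℝ X ℝ).comp (ContinuousLinearMap.fst ℝ (X × ℝ) ℝ))
  have hA' : ∀ k x σ t, A' k ((x, σ), t) = (x, k.1⁻¹ * σ) := fun k x σ t => rfl
  have hbd : ∀ (k : ι) (σ : ℝ), ‖k.1⁻¹ * σ‖ ≤ ‖σ‖ := by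
    intro k σ
    rw [norm_mul]
    refine mul_le_of_le_one_left (norm_nonneg _) ?_
    rw [norm_inv, Real.norm_of_nonneg (by linarith [hι1 k])]
    exact inv_le_one_of_one_le₀ (hι1 k)
  have hAn : ∀ k, ‖A k‖ ≤ 1 := by
    intro k
    refine ContinuousLinearMap.opNorm_le_bound _ zero_le_one ?_
    rintro ⟨⟨x, σ⟩, t⟩
    rw [hA, one_mul]
    have := hbd k σ
    have h1 : ‖x‖ ≤ ‖((x, σ), t)‖ := (norm_fst_le (x, σ)).trans (norm_fst_le ((x, σ), t))
    have h2 : ‖σ‖ ≤ ‖((x, σ), t)‖ := (norm_snd_le (x, σ)).trans (norm_fst_le ((x, σ), t))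
    exact max_le h1 (max_le (this.trans h2) (norm_snd_le ((x, σ), t)))
  have hAn' : ∀ k, ‖A' k‖ ≤ 1 := by
    intro k
    refine ContinuousLinearMap.opNorm_le_bound _ zero_le_one ?_
    rintro ⟨⟨x, σ⟩, t⟩
    rw [hA', one_mul]
    have := hbd k σ
    have h1 : ‖x‖ ≤ ‖((x, σ), t)‖ := (norm_fst_le (x, σ)).trans (norm_fst_le ((x, σ), t))
    have h2 : ‖σ‖ ≤ ‖((x, σ), t)‖ := (norm_snd_le (x, σ)).trans (norm_fst_le ((x, σ), t))
    exact max_le h1 (this.trans h2)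
  have uA : UB S P (fun k p => A k p) := UB.clm A 1 hAn hS hPS hPc
  have uA' : UB S P (fun k p => A' k p) := UB.clm A' 1 hAn' hS hPS hPc
  let T₀ : Set (X × ℝ × ℝ) := V ×ˢ Ico (0:ℝ) (2 * c) ×ˢ univ
  let Q₀ : Set (X × ℝ × ℝ) := K ×ˢ Icc (0:ℝ) c ×ˢ Icc δ₁ δ₂
  have hT₀ : UniqueDiffOn ℝ T₀ :=
    hVopen.uniqueDiffOn.prod ((uniqueDiffOn_Ico _ _).prod uniqueDiffOn_univ)
  have hQ₀ : IsCompact Q₀ := hUcpt.prod (isCompact_Icc.prod isCompact_Icc)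
  have hQT : Q₀ ⊆ T₀ := by
    rintro ⟨x, s, t⟩ ⟨hx, hs, ht⟩
    exact ⟨hUV hx, ⟨hs.1, hs.2.trans_lt (by linarith)⟩, trivial⟩
  have mA : ∀ k, MapsTo (fun p => A k p) (S k) T₀ := by
    rintro k ⟨⟨x, σ⟩, t⟩ ⟨⟨hx, hσ⟩, ht⟩
    exact ⟨hx, hres k σ hσ, trivial⟩
  have mA2 : ∀ k, MapsTo (fun p => A k p) P Q₀ := by
    rintro k ⟨⟨x, σ⟩, t⟩ ⟨⟨hx, hσ⟩, ht⟩
    exact ⟨hx, hres' k σ hσ, ht⟩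
  have mA' : ∀ k, MapsTo (fun p => A' k p) (S k) (V ×ˢ Ico (0:ℝ) (2 * c)) := by
    rintro k ⟨⟨x, σ⟩, t⟩ ⟨⟨hx, hσ⟩, ht⟩
    exact ⟨hx, hres k σ hσ⟩
  have mA2' : ∀ k, MapsTo (fun p => A' k p) P (K ×ˢ Icc (0:ℝ) c) := by
    rintro k ⟨⟨x, σ⟩, t⟩ ⟨⟨hx, hσ⟩, ht⟩
    exact ⟨hx, hres' k σ hσ⟩
  have ua₀ : UB (fun _ : ι => T₀) Q₀ (fun _ q => a₀ q.1 q.2.1 q.2.2) :=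
    UB.of_compact hT₀ hQ₀ hQT ha₀smooth
  have ua₁ : UB (fun _ : ι => T₀) Q₀ (fun k q => a₁ q.1 q.2.1 q.2.2 k.1) := by
    refine UB.mk' (fun k => ha₁smooth k.1 (by linarith [hι1 k])) (fun m => ?_)
    obtain ⟨M, hM, hb⟩ := ha₁O Q₀ hQT hQ₀ m
    exact ⟨M, fun k p hp => (hb m le_rfl p hp k.1 (hι1 k)).trans (div_le_self hM.le (hι1 k))⟩
  have uamp := (ua₀.add ua₁ (fun _ => hT₀) (fun _ => hQT)).comp uA (fun _ => hT₀) hS hPS mA mA2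
  -- phase
  have uh : UB (fun _ : ι => V ×ˢ Ico (0:ℝ) (2 * c)) (K ×ˢ Icc (0:ℝ) c) (fun _ => h) :=
    UB.of_compact (hcV _) (hUcpt.prod isCompact_Icc)
      (prod_mono hUV (fun s hs => ⟨hs.1, hs.2.trans_lt (by linarith)⟩)) hh
  have uhA := uh.comp uA' (fun _ => hcV _) hS hPS mA' mA2'
  let Lt : (X × ℝ) × ℝ →L[ℝ] ℂ := -(Complex.ofRealCLM.comp (ContinuousLinearMap.snd ℝ (X × ℝ) ℝ))
  let Lσ : (X × ℝ) × ℝ →L[ℝ] ℂ := Complex.ofRealCLM.comp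
    ((ContinuousLinearMap.snd ℝ X ℝ).comp (ContinuousLinearMap.fst ℝ (X × ℝ) ℝ))
  have uLt : UB S P (fun _ p => Lt p) := UB.clm (fun _ => Lt) ‖Lt‖ (fun _ => le_rfl) hS hPS hPc
  have uLσ : UB S P (fun _ p => Lσ p) := UB.clm (fun _ => Lσ) ‖Lσ‖ (fun _ => le_rfl) hS hPS hPc
  have uph := uLt.mul (uLσ.mul uhA hS hPS) hS hPS
  obtain ⟨R, hR⟩ := uph.2 0
  have uexp : UB (fun _ : ι => (univ : Set ℂ)) (Metric.closedBall 0 R) (fun _ => Complex.exp) :=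
    UB.of_compact uniqueDiffOn_univ (isCompact_closedBall _ _) (subset_univ _)
      Complex.contDiff_exp.contDiffOn
  have ue := uexp.comp uph (fun _ => uniqueDiffOn_univ) hS hPS (fun _ _ _ => trivial)
    (fun k p hp => by
      have := hR k p hp 0 le_rfl
      rw [norm_iteratedFDerivWithin_zero] at this
      simpa using this)
  have uall := ue.mul uamp hS hPS
  -- integration
  let f : ι → (X × ℝ) × ℝ → ℂ := fun k p =>
    Complex.exp (Lt p * (Lσ p * h (A' k p))) *
      (a₀ (A k p).1 (A k p).2.1 (A k p).2.2 + a₁ (A k p).1 (A k p).2.1 (A k p).2.2 k.1)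
  have uf : UB S P f := uall
  let F : ι → X × ℝ → ℂ := fun k q => ∫ t in δ₁..δ₂, f k (q, t)
  have uF : UB W (K ×ˢ Icc (0:ℝ) C) F := by
    refine UB.mk' (fun k => contDiffOn_infty.2
      (fun m => int_contDiff (hcV _) (locConv_prod hVopen _) hδ m ℂ (f k) (uf.1 k))) (fun m => ?_)
    obtain ⟨M, hM⟩ := uf.2 m
    refine ⟨M * (δ₂ - δ₁), fun k p hp => ?_⟩
    refine int_bound (hcV _) (locConv_prod hVopen _) hδ m ℂ (f k) (uf.1 k) p ?_ M
      (fun t ht => hM k (p, t) ⟨hp, ht⟩ m le_rfl)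
    exact ⟨hUV hp.1, hp.2.1, hp.2.2.trans_lt (hCd k)⟩
  have hBF : ∀ (k : ι), ∀ y ∈ V, ∀ s ∈ Ico (0:ℝ) (2 * c), B k.1 y s = F k (y, k.1 * s) := by
    intro k y hy s hs
    have hk : k.1 ≠ 0 := by linarith [hι1 k]
    rw [hB]
    refine intervalIntegral.integral_congr (fun t _ => ?_)
    have e1 : k.1⁻¹ * (k.1 * s) = s := by field_simp
    simp only [f, hA, hA', e1]
    have e2 : τ y s = s * h (y, s) := hτh y hy s hs
    have e3 : Lt ((y, k.1 * s), t) = -(t : ℂ) := rfl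
    have e4 : Lσ ((y, k.1 * s), t) = ((k.1 * s : ℝ) : ℂ) := rfl
    rw [e2, e3, e4]
    congr 2
    push_cast
    ring
  intro i l
  obtain ⟨M, hM⟩ := final_bound hVopen (d := fun k : ι => 2 * c * k.1) hUV hCd uF i l
  refine ⟨|M| + 1, by positivity, fun k hk x hx s hs0 hs => ?_⟩
  let κ : ι := ⟨k, hk⟩
  have hk1 : 1 ≤ k := hι1 κ
  have hk0 : 0 < k := by linarith
  have hks : k * s ∈ Icc (0:ℝ) C := by
    refine ⟨by positivity, ?_⟩
    rw [le_div_iff₀ (by positivity)] at hs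
    nlinarith [mul_nonneg hk0.le hs0]
  have hs2 : s ∈ Ico (0:ℝ) (2 * c) := by
    refine ⟨hs0, ?_⟩
    have h1 := hCd κ
    have h2 : k * s < 2 * c * k := hks.2.trans_lt h1
    nlinarith
  have hxK : x ∈ K := subset_closure hx
  have hxV : x ∈ V := hUV hxK
  have hEq : EqOn (fun y => iteratedDerivWithin l (fun s' => B k y s') (Ici 0) s)
      ((k ^ l : ℝ) • fun y => iteratedFDerivWithin ℝ l (F κ) (W κ) (y, k * s) (fun _ => (0, 1))) V :=
    fun y hy => iter_deriv_rescale hVopen hk0 (uF.1 κ) hy (hBF κ y hy) l s hs2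
  have hcd : ContDiffOn ℝ i
      (fun y => iteratedFDerivWithin ℝ l (F κ) (W κ) (y, k * s) (fun _ => (0, 1))) V := by
    have hD : ContDiffOn ℝ i (iteratedFDerivWithin ℝ l (F κ) (W κ)) (W κ) := fun q hq =>
      (uF.1 κ q hq).iteratedFDerivWithin_right (hcV _) (by exact_mod_cast le_top) hq
    let L := (ContinuousMultilinearMap.apply ℝ (fun _ : Fin l => (Fin n → ℝ) × ℝ) ℂ
      (fun _ => (0, 1)))
    refine (L.contDiff.comp_contDiffOn hD).comp (f := fun y : Fin n → ℝ => (y, k * s))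
      (by fun_prop) (fun y hy => ⟨hy, hks.1, hks.2.trans_lt (hCd κ)⟩)
  rw [← iteratedFDerivWithin_of_isOpen i hVopen hxV, iteratedFDerivWithin_congr hEq hxV,
    iteratedFDerivWithin_const_smul_apply (hcd x hxV) hVopen.uniqueDiffOn hxV, norm_smul]
  have hfin := hM κ x hxK (k * s) hks
  rw [Real.norm_of_nonneg (by positivity), mul_comm]
  gcongr
  exact hfin.trans ((le_abs_self M).trans (by linarith))
end

section
/- With the notation of the context, let k₀ > 0 and let {φ_k}_{k ≥ k₀} be a family of smooth functions φ_k : V → (0,c) such that φ_k = O(k^{-2}) in C^∞-topology on V (for every compact K ⊆ V and every m ∈ ℕ there is C > 0 with all partial derivatives of φ_k of order ≤ m bounded by C·k^{-2} on K for all k ≥ k₀). Define b_k : V → ℂ by b_k(x) = B_k(x, φ_k(x)) and b₀ : V → ℂ by b₀(x) = ∫_{δ₁}^{δ₂} a₀(x,0,t) dt. Then b_k = b₀ + O(k^{-1}) in C^∞-topology on U, i.e. for every compact K ⊆ U and every m ∈ ℕ there is C' > 0 such that all partial derivatives of b_k − b₀ of order ≤ m are bounded in norm by C'·k^{-1} on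 K, for all sufficiently large k. -/
open Set

/-- Uniform bounds on compact sets. -/
def BdK {ι E F : Type} [NormedAddCommGroup E] [NormedAddCommGroup F]
    (Ω : Set E) (r : ι → ℝ) (f : ι → E → F) : Prop :=
  ∀ K ⊆ Ω, IsCompact K → ∃ C : ℝ, 0 ≤ C ∧ ∀ k, ∀ x ∈ K, ‖f k x‖ ≤ C * r k

/-- The family `f` is `O(r)` in `C^m` on `Ω`. -/
def OO {ι E : Type} [NormedAddCommGroup E] [NormedSpace ℝ E] (Ω : Set E) (r : ι → ℝ) :
    (m : ℕ) → {F : Type} → [NormedAddCommGroup F] → [NormedSpace ℝ F] → (ι → E → F) → Prop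
  | 0, _, _, _, f => BdK Ω r f
  | m + 1, _, _, _, f => (∀ k, DifferentiableOn ℝ (f k) Ω) ∧ BdK Ω r f ∧
      OO Ω r m (fun k => fderivWithin ℝ (f k) Ω)

set_option linter.unusedSectionVars false

section
variable {ι E : Type} [NormedAddCommGroup E] [NormedSpace ℝ E] {Ω : Set E}
  {F G H : Type} [NormedAddCommGroup F] [NormedSpace ℝ F]
  [NormedAddCommGroup G] [NormedSpace ℝ G] [NormedAddCommGroup H] [NormedSpace ℝ H]

theorem OO.bd {r : ι → ℝ} {m : ℕ} {f : ι → E → F} (h : OO Ω r m f) : BdK Ω r f := by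
  cases m with
  | zero => exact h
  | succ m => exact h.2.1

theorem OO.pred {r : ι → ℝ} {m : ℕ} {f : ι → E → F} (h : OO Ω r (m + 1) f) : OO Ω r m f := by
  induction m generalizing F with
  | zero => exact h.bd
  | succ m ih => exact ⟨h.1, h.2.1, ih h.2.2⟩

theorem BdK.congr {r : ι → ℝ} {f g : ι → E → F} (h : BdK Ω r f)
    (hfg : ∀ k, ∀ x ∈ Ω, g k x = f k x) : BdK Ω r g := by
  intro K hK hKc
  obtain ⟨C, hC, h⟩ := h K hK hKc
  exact ⟨C, hC, fun k x hx => by rw [hfg k x (hK hx)]; exact h k x hx⟩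

theorem OO.congr {r : ι → ℝ} {m : ℕ} {f g : ι → E → F} (h : OO Ω r m f)
    (hfg : ∀ k, ∀ x ∈ Ω, g k x = f k x) : OO Ω r m g := by
  induction m generalizing F with
  | zero => exact BdK.congr h hfg
  | succ m ih =>
    refine ⟨fun k => (h.1 k).congr (hfg k), h.2.1.congr hfg, ih h.2.2 fun k x hx => ?_⟩
    exact fderivWithin_congr (hfg k) (hfg k x hx)

theorem BdK.add {r : ι → ℝ} {f g : ι → E → F} (hf : BdK Ω r f) (hg : BdK Ω r g) :
    BdK Ω r (fun k x => f k x + g k x) := by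
  intro K hK hKc
  obtain ⟨C, hC, hf⟩ := hf K hK hKc
  obtain ⟨D, hD, hg⟩ := hg K hK hKc
  refine ⟨C + D, by positivity, fun k x hx => (norm_add_le _ _).trans ?_⟩
  rw [add_mul]
  exact add_le_add (hf k x hx) (hg k x hx)

theorem OO.add (hΩ : UniqueDiffOn ℝ Ω) {r : ι → ℝ} {m : ℕ} {f g : ι → E → F} (hf : OO Ω r m f)
    (hg : OO Ω r m g) : OO Ω r m (fun k x => f k x + g k x) := by
  induction m generalizing F with
  | zero => exact BdK.add hf hg
  | succ m ih =>
    refine ⟨fun k => (hf.1 k).add (hg.1 k), hf.2.1.add hg.2.1,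
      (ih hf.2.2 hg.2.2).congr fun k x hx => ?_⟩
    exact fderivWithin_fun_add (hΩ x hx) (hf.1 k x hx) (hg.1 k x hx)

theorem BdK.mono {r r' : ι → ℝ} (hr : ∀ k, r k ≤ r' k) {f : ι → E → F} (h : BdK Ω r f) :
    BdK Ω r' f := by
  intro K hK hKc
  obtain ⟨C, hC, h⟩ := h K hK hKc
  exact ⟨C, hC, fun k x hx => (h k x hx).trans (mul_le_mul_of_nonneg_left (hr k) hC)⟩

theorem OO.mono {r r' : ι → ℝ} (hr : ∀ k, r k ≤ r' k) {m : ℕ} {f : ι → E → F} (h : OO Ω r m f) :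
    OO Ω r' m f := by
  induction m generalizing F with
  | zero => exact BdK.mono hr h
  | succ m ih => exact ⟨h.1, h.2.1.mono hr, ih h.2.2⟩

theorem BdK.bilin (B : F →L[ℝ] G →L[ℝ] H) {r r' : ι → ℝ} (hr : ∀ k, 0 ≤ r k)
    {f : ι → E → F} {g : ι → E → G} (hf : BdK Ω r f) (hg : BdK Ω r' g) :
    BdK Ω (fun k => r k * r' k) (fun k x => B (f k x) (g k x)) := by
  intro K hK hKc
  obtain ⟨C, hC, hf⟩ := hf K hK hKc
  obtain ⟨D, hD, hg⟩ := hg K hK hKc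
  refine ⟨‖B‖ * C * D, by positivity, fun k x hx => (B.le_opNorm₂ _ _).trans ?_⟩
  have h1 := hf k x hx
  have h2 := hg k x hx
  have h3 := hr k
  calc ‖B‖ * ‖f k x‖ * ‖g k x‖ ≤ ‖B‖ * (C * r k) * (D * r' k) := by gcongr
    _ = _ := by ring

theorem OO.bilin (hΩ : UniqueDiffOn ℝ Ω) (B : F →L[ℝ] G →L[ℝ] H) {r r' : ι → ℝ}
    (hr : ∀ k, 0 ≤ r k) {m : ℕ}
    {f : ι → E → F} {g : ι → E → G} (hf : OO Ω r m f) (hg : OO Ω r' m g) :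
    OO Ω (fun k => r k * r' k) m (fun k x => B (f k x) (g k x)) := by
  induction m generalizing F G H with
  | zero => exact BdK.bilin B hr hf hg
  | succ m ih =>
    refine ⟨fun k x hx => ?_, hf.2.1.bilin B hr hg.2.1, ?_⟩
    · exact (B.hasFDerivWithinAt_of_bilinear (hf.1 k x hx).hasFDerivWithinAt
        (hg.1 k x hx).hasFDerivWithinAt).differentiableWithinAt
    · refine ((ih (B.precompR E) hf.pred hg.2.2).add hΩ
        (ih (B.precompL E) hf.2.2 hg.pred)).congr fun k x hx => ?_
      exact B.fderivWithin_of_bilinear (hf.1 k x hx) (hg.1 k x hx) (hΩ x hx)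

theorem OO.of_contDiffOn (hΩ : UniqueDiffOn ℝ Ω) {g : E → F}
    (hg : ContDiffOn ℝ (⊤ : ℕ∞) g Ω) (m : ℕ) : OO Ω (fun _ : ι => (1:ℝ)) m (fun _ => g) := by
  have bd : ∀ {F : Type} [NormedAddCommGroup F] {g : E → F}, ContinuousOn g Ω →
      BdK Ω (fun _ : ι => (1:ℝ)) (fun _ => g) := by
    intro F _ g hg K hK hKc
    obtain ⟨C, hC⟩ := hKc.exists_bound_of_continuousOn (hg.mono hK)
    exact ⟨max C 0, le_max_right _ _, fun k x hx => by
      rw [mul_one]; exact (hC x hx).trans (le_max_left _ _)⟩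
  induction m generalizing F with
  | zero => exact bd hg.continuousOn
  | succ m ih =>
    refine ⟨fun _ => hg.differentiableOn (by simp), bd hg.continuousOn, ih ?_⟩
    exact hg.fderivWithin hΩ (by simp)

theorem OO.clm (hΩ : UniqueDiffOn ℝ Ω) (L : F →L[ℝ] G) {r : ι → ℝ} {m : ℕ}
    {f : ι → E → F} (hf : OO Ω r m f) : OO Ω r m (fun k x => L (f k x)) := by
  have h1 := OO.of_contDiffOn (ι := ι) hΩ (contDiffOn_const (c := L) (s := Ω)) m
  have := OO.bilin hΩ (ContinuousLinearMap.id ℝ (F →L[ℝ] G)) (fun _ => zero_le_one) h1 hf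
  simpa using this

theorem OO.of_bounds (hΩ : UniqueDiffOn ℝ Ω) {r : ι → ℝ} {m : ℕ}
    {f : ι → E → F} (hf : ∀ k, ContDiffOn ℝ (⊤ : ℕ∞) (f k) Ω)
    (h : ∀ K ⊆ Ω, IsCompact K → ∃ C : ℝ, 0 ≤ C ∧ ∀ i ≤ m, ∀ x ∈ K, ∀ k,
      ‖iteratedFDerivWithin ℝ i (f k) Ω x‖ ≤ C * r k) : OO Ω r m f := by
  induction m generalizing F with
  | zero =>
    intro K hK hKc
    obtain ⟨C, hC, h⟩ := h K hK hKc
    exact ⟨C, hC, fun k x hx => by simpa using h 0 le_rfl x hx k⟩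
  | succ m ih =>
    refine ⟨fun k => (hf k).differentiableOn (by simp), ?_, ih ?_ ?_⟩
    · intro K hK hKc
      obtain ⟨C, hC, h⟩ := h K hK hKc
      exact ⟨C, hC, fun k x hx => by simpa using h 0 (Nat.zero_le _) x hx k⟩
    · exact fun k => (hf k).fderivWithin hΩ (by simp)
    · intro K hK hKc
      obtain ⟨C, hC, h⟩ := h K hK hKc
      refine ⟨C, hC, fun i hi x hx k => ?_⟩
      rw [norm_iteratedFDerivWithin_fderivWithin hΩ (hK hx)]
      exact h (i + 1) (by omega) x hx k

theorem OO.bounds (hΩ : UniqueDiffOn ℝ Ω) {r : ι → ℝ} (hr : ∀ k, 0 ≤ r k) {m : ℕ}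
    {f : ι → E → F} (h : OO Ω r m f) :
    ∀ K ⊆ Ω, IsCompact K → ∃ C : ℝ, 0 ≤ C ∧ ∀ i ≤ m, ∀ x ∈ K, ∀ k,
      ‖iteratedFDerivWithin ℝ i (f k) Ω x‖ ≤ C * r k := by
  intro K hK hKc
  induction m generalizing F with
  | zero =>
    obtain ⟨C, hC, h⟩ := h K hK hKc
    refine ⟨C, hC, fun i hi x hx k => ?_⟩
    obtain rfl : i = 0 := by omega
    simpa using h k x hx
  | succ m ih =>
    obtain ⟨C, hC, h1⟩ := h.2.1 K hK hKc
    obtain ⟨D, hD, h2⟩ := ih h.2.2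
    refine ⟨max C D, le_max_of_le_left hC, fun i hi x hx k => ?_⟩
    cases i with
    | zero =>
      rw [norm_iteratedFDerivWithin_zero]
      exact (h1 k x hx).trans (mul_le_mul_of_nonneg_right (le_max_left _ _) (hr k))
    | succ i =>
      rw [← norm_iteratedFDerivWithin_fderivWithin hΩ (hK hx)]
      exact (h2 i (by omega) x hx k).trans (mul_le_mul_of_nonneg_right (le_max_right _ _) (hr k))

theorem OO.scale (hΩ : UniqueDiffOn ℝ Ω) (l : ι → ℝ) {r : ι → ℝ} {m : ℕ}
    {f : ι → E → F} (h : OO Ω r m f) :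
    OO Ω (fun k => |l k| * r k) m (fun k x => l k • f k x) := by
  have bd : ∀ {F : Type} [NormedAddCommGroup F] [NormedSpace ℝ F] {f : ι → E → F}, BdK Ω r f →
      BdK Ω (fun k => |l k| * r k) (fun k x => l k • f k x) := by
    intro F _ _ f hf K hK hKc
    obtain ⟨C, hC, h⟩ := hf K hK hKc
    refine ⟨C, hC, fun k x hx => ?_⟩
    rw [norm_smul, Real.norm_eq_abs, mul_left_comm]
    exact mul_le_mul_of_nonneg_left (h k x hx) (abs_nonneg _)
  induction m generalizing F with
  | zero => exact bd h
  | succ m ih =>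
    refine ⟨fun k => (h.1 k).const_smul (l k), bd h.2.1, (ih h.2.2).congr fun k x hx => ?_⟩
    exact fderivWithin_fun_const_smul (hΩ x hx) (h.1 k x hx) (l k)

/-- Composition. -/
theorem OO.comp {Q : Type} [NormedAddCommGroup Q] [NormedSpace ℝ Q] {W : Set E} {Z : Set Q}
    (hW : UniqueDiffOn ℝ W) {r : ι → ℝ} (hr : ∀ k, 0 ≤ r k) {m : ℕ}
    {Φ : ι → E → Q}
    (hmaps : ∀ K ⊆ W, IsCompact K → ∃ K' ⊆ Z, IsCompact K' ∧ ∀ k, ∀ x ∈ K, Φ k x ∈ K')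
    (hΦ : OO W (fun _ => 1) m Φ) {g : ι → Q → F} (hg : OO Z r m g) :
    OO W r m (fun k x => g k (Φ k x)) := by
  have hM : ∀ k, MapsTo (Φ k) W Z := by
    intro k x hx
    obtain ⟨K', hK', -, h⟩ := hmaps {x} (by simpa using hx) isCompact_singleton
    exact hK' (h k x rfl)
  have bd : ∀ {F : Type} [NormedAddCommGroup F] [NormedSpace ℝ F] {g : ι → Q → F}, BdK Z r g →
      BdK W r (fun k x => g k (Φ k x)) := by
    intro F _ _ f hf K hK hKc
    obtain ⟨K', hK', hc, h⟩ := hmaps K hK hKc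
    obtain ⟨C, hC, hf⟩ := hf K' hK' hc
    exact ⟨C, hC, fun k x hx => hf k _ (h k x hx)⟩
  induction m generalizing F with
  | zero => exact bd hg
  | succ m ih =>
    refine ⟨fun k => (hg.1 k).comp (hΦ.1 k) (hM k), bd hg.2.1, ?_⟩
    have h1 := ih hΦ.pred hg.2.2
    have h2 := OO.bilin hW (ContinuousLinearMap.compL ℝ E Q F) hr h1 hΦ.2.2
    simp only [mul_one] at h2
    refine h2.congr fun k x hx => ?_
    exact fderivWithin_comp x (hg.1 k _ (hM k hx)) (hΦ.1 k x hx) (hM k) (hW x hx)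

/-- Differences of compositions. -/
theorem OO.comp_sub {Q : Type} [NormedAddCommGroup Q] [NormedSpace ℝ Q] {W : Set E} {Z : Set Q}
    (hW : UniqueDiffOn ℝ W) (hZ : UniqueDiffOn ℝ Z) {r : ι → ℝ} (hr : ∀ k, 0 ≤ r k) {m : ℕ}
    {Φ Ψ : ι → E → Q}
    (hmaps : ∀ K ⊆ W, IsCompact K → ∃ K' ⊆ Z, IsCompact K' ∧ ∀ k, ∀ x ∈ K,
      segment ℝ (Ψ k x) (Φ k x) ⊆ K')
    (hΦ : OO W (fun _ => 1) m Φ) (hΨ : OO W (fun _ => 1) m Ψ)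
    (hd : OO W r m (fun k x => Φ k x - Ψ k x)) {g : Q → F} (hg : ContDiffOn ℝ (⊤ : ℕ∞) g Z) :
    OO W r m (fun k x => g (Φ k x) - g (Ψ k x)) := by
  have hm1 : ∀ K ⊆ W, IsCompact K → ∃ K' ⊆ Z, IsCompact K' ∧ ∀ k, ∀ x ∈ K, Φ k x ∈ K' := by
    intro K hK hKc
    obtain ⟨K', h1, h2, h3⟩ := hmaps K hK hKc
    exact ⟨K', h1, h2, fun k x hx => h3 k x hx (right_mem_segment _ _ _)⟩
  have hm2 : ∀ K ⊆ W, IsCompact K → ∃ K' ⊆ Z, IsCompact K' ∧ ∀ k, ∀ x ∈ K, Ψ k x ∈ K' := by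
    intro K hK hKc
    obtain ⟨K', h1, h2, h3⟩ := hmaps K hK hKc
    exact ⟨K', h1, h2, fun k x hx => h3 k x hx (left_mem_segment _ _ _)⟩
  have hM1 : ∀ k, MapsTo (Φ k) W Z := by
    intro k x hx
    obtain ⟨K', hK', -, h⟩ := hm1 {x} (by simpa using hx) isCompact_singleton
    exact hK' (h k x rfl)
  have hM2 : ∀ k, MapsTo (Ψ k) W Z := by
    intro k x hx
    obtain ⟨K', hK', -, h⟩ := hm2 {x} (by simpa using hx) isCompact_singleton
    exact hK' (h k x rfl)
  have bd : ∀ {F : Type} [NormedAddCommGroup F] [NormedSpace ℝ F] {g : Q → F},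
      ContDiffOn ℝ (⊤ : ℕ∞) g Z → BdK W r (fun k x => g (Φ k x) - g (Ψ k x)) := by
    intro F _ _ g hg K hK hKc
    obtain ⟨K', hK', hc, h⟩ := hmaps K hK hKc
    obtain ⟨C, hC⟩ := hc.exists_bound_of_continuousOn
      ((hg.fderivWithin hZ (m := (⊤ : ℕ∞)) (by simp)).continuousOn.mono hK')
    obtain ⟨D, hD, hd⟩ := hd.bd K hK hKc
    refine ⟨max C 0 * D, by positivity, fun k x hx => ?_⟩
    have := Convex.norm_image_sub_le_of_norm_hasFDerivWithin_le (𝕜 := ℝ) (f := g)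
      (f' := fderivWithin ℝ g Z) (C := max C 0)
      (s := segment ℝ (Ψ k x) (Φ k x)) (x := Ψ k x) (y := Φ k x)
      (fun y hy => ((hg.differentiableOn (by simp) y
        (hK' (h k x hx hy))).hasFDerivWithinAt).mono ((h k x hx).trans hK'))
      (fun y hy => (hC y (h k x hx hy)).trans (le_max_left _ _))
      (convex_segment _ _) (left_mem_segment _ _ _) (right_mem_segment _ _ _)
    refine this.trans ?_
    rw [mul_assoc]
    exact mul_le_mul_of_nonneg_left (hd k x hx) (le_max_right _ _)
  induction m generalizing F with
  | zero => exact bd hg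
  | succ m ih =>
    have hgd : DifferentiableOn ℝ g Z := hg.differentiableOn (by simp)
    have hg' : ContDiffOn ℝ (⊤ : ℕ∞) (fderivWithin ℝ g Z) Z := hg.fderivWithin hZ (by simp)
    have d1 : ∀ k, DifferentiableOn ℝ (fun x => g (Φ k x)) W :=
      fun k => hgd.comp (hΦ.1 k) (hM1 k)
    have d2 : ∀ k, DifferentiableOn ℝ (fun x => g (Ψ k x)) W :=
      fun k => hgd.comp (hΨ.1 k) (hM2 k)
    refine ⟨fun k => (d1 k).sub (d2 k), bd hg, ?_⟩
    have h1 := ih hΦ.pred hΨ.pred hd.pred hg'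
    have h2 := OO.bilin hW (ContinuousLinearMap.compL ℝ E Q F) hr h1 hΦ.2.2
    have h3 := OO.comp hW (fun _ => zero_le_one) hm2 hΨ.pred
      (OO.of_contDiffOn (ι := ι) hZ hg' m)
    have h4 := OO.bilin hW (ContinuousLinearMap.compL ℝ E Q F) (fun _ => zero_le_one) h3 hd.2.2
    simp only [mul_one, one_mul] at h2 h4
    refine (h2.add hW h4).congr fun k x hx => ?_
    have e1 : fderivWithin ℝ (fun x => g (Φ k x)) W x = _ :=
      fderivWithin_comp x (hgd _ (hM1 k hx)) (hΦ.1 k x hx) (hM1 k) (hW x hx)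
    have e2 : fderivWithin ℝ (fun x => g (Ψ k x)) W x = _ :=
      fderivWithin_comp x (hgd _ (hM2 k hx)) (hΨ.1 k x hx) (hM2 k) (hW x hx)
    rw [fderivWithin_fun_sub (hW x hx) (d1 k x hx) (d2 k x hx), e1, e2,
      fderivWithin_fun_sub (hW x hx) (hΦ.1 k x hx) (hΨ.1 k x hx)]
    simp only [ContinuousLinearMap.compL_apply, ContinuousLinearMap.comp_sub,
      ContinuousLinearMap.sub_comp]
    abel

/-- Integration in a parameter. -/
theorem OO.integral [FiniteDimensional ℝ E] {V : Set E} (hV : IsOpen V) {a b : ℝ} (hab : a ≤ b)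
    {r : ι → ℝ} {m : ℕ} {f : ι → E × ℝ → F} (h : OO (V ×ˢ univ) r (m + 1) f) :
    OO V r m (fun k x => ∫ t in a..b, f k (x, t)) := by
  have := FiniteDimensional.proper ℝ E
  have hO : IsOpen (V ×ˢ (univ : Set ℝ)) := hV.prod isOpen_univ
  have bd : ∀ {F : Type} [NormedAddCommGroup F] [NormedSpace ℝ F] {f : ι → E × ℝ → F},
      BdK (V ×ˢ univ) r f → BdK V r (fun k x => ∫ t in a..b, f k (x, t)) := by
    intro F _ _ f hf K hK hKc
    obtain ⟨C, hC, h⟩ := hf (K ×ˢ Icc a b) (prod_mono hK (subset_univ _)) (hKc.prod isCompact_Icc)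
    refine ⟨C * (b - a), mul_nonneg hC (sub_nonneg.2 hab), fun k x hx => ?_⟩
    have := intervalIntegral.norm_integral_le_of_norm_le_const (a := a) (b := b)
      (f := fun t => f k (x, t)) (C := C * r k) (fun t ht => by
        rw [uIoc_of_le hab] at ht
        exact h k (x, t) ⟨hx, Ioc_subset_Icc_self ht⟩)
    rw [abs_of_nonneg (sub_nonneg.2 hab)] at this
    linarith
  induction m generalizing F with
  | zero => exact bd h.2.1
  | succ m ih =>
    have hc1 : ∀ k, ∀ x ∈ V, Continuous (fun t : ℝ => f k (x, t)) := by
      intro k x hx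
      exact (h.1 k).continuousOn.comp_continuous (by fun_prop) (fun t => ⟨hx, trivial⟩)
    have hc2 : ∀ k, ∀ x ∈ V, Continuous (fun t : ℝ =>
        (fderivWithin ℝ (f k) (V ×ˢ univ) (x, t)).comp (ContinuousLinearMap.inl ℝ E ℝ)) := by
      intro k x hx
      have : Continuous (fun t : ℝ => fderivWithin ℝ (f k) (V ×ˢ univ) (x, t)) :=
        (h.2.2.1 k).continuousOn.comp_continuous (by fun_prop) (fun t => ⟨hx, trivial⟩)
      exact this.clm_comp continuous_const
    have hder : ∀ k, ∀ x ∈ V, HasFDerivAt (fun x => ∫ t in a..b, f k (x, t))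
        (∫ t in a..b,
          (fderivWithin ℝ (f k) (V ×ˢ univ) (x, t)).comp (ContinuousLinearMap.inl ℝ E ℝ)) x := by
      intro k x hx
      obtain ⟨K, hKc, hxK, hKV⟩ := exists_compact_subset hV hx
      obtain ⟨C, hC, hbd⟩ := h.2.2.bd (K ×ˢ Icc a b) (prod_mono hKV (subset_univ _))
        (hKc.prod isCompact_Icc)
      refine intervalIntegral.hasFDerivAt_integral_of_dominated_of_fderiv_le
        (s := K) (F := fun x t => f k (x, t))
        (F' := fun x t =>
          (fderivWithin ℝ (f k) (V ×ˢ univ) (x, t)).comp (ContinuousLinearMap.inl ℝ E ℝ))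
        (bound := fun _ => C * r k * ‖ContinuousLinearMap.inl ℝ E ℝ‖)
        (mem_interior_iff_mem_nhds.1 hxK) ?_ ?_ ?_ ?_ ?_ ?_
      · filter_upwards [hV.mem_nhds hx] with y hy
        exact (hc1 k y hy).aestronglyMeasurable
      · exact (hc1 k x hx).intervalIntegrable _ _
      · exact (hc2 k x hx).aestronglyMeasurable
      · refine Filter.Eventually.of_forall fun t ht y hy => ?_
        rw [uIoc_of_le hab] at ht
        refine (ContinuousLinearMap.opNorm_comp_le _ _).trans ?_
        exact mul_le_mul_of_nonneg_right (hbd k (y, t) ⟨hy, Ioc_subset_Icc_self ht⟩)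
          (norm_nonneg _)
      · exact intervalIntegrable_const
      · refine Filter.Eventually.of_forall fun t ht y hy => ?_
        have hmem : (y, t) ∈ V ×ˢ (univ : Set ℝ) := ⟨hKV hy, trivial⟩
        have h1 : HasFDerivAt (f k) (fderivWithin ℝ (f k) (V ×ˢ univ) (y, t)) (y, t) :=
          ((h.1 k _ hmem).hasFDerivWithinAt).hasFDerivAt (hO.mem_nhds hmem)
        exact h1.comp y (hasFDerivAt_prodMk_left y t)
    refine ⟨fun k x hx => (hder k x hx).differentiableAt.differentiableWithinAt, bd h.2.1, ?_⟩
    have h1 := ih (h.2.2.clm hO.uniqueDiffOn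
      ((ContinuousLinearMap.compL ℝ E (E × ℝ) F).flip (ContinuousLinearMap.inl ℝ E ℝ)))
    refine h1.congr fun k x hx => ?_
    rw [fderivWithin_of_isOpen hV hx, (hder k x hx).fderiv]
    rfl

end


/-- **Statement 2.** With the phase `τ`, amplitudes `a₀, a₁` and
`B_k(x,s) = ∫_{δ₁}^{δ₂} e^{-ktτ(x,s)} (a₀(x,s,t) + a₁(x,s,t,k)) dt` as in the context,
let `{φ_k}_{k ≥ k₀}` be a family of smooth functions `φ_k : V → (0,c)` with
`φ_k = O(k⁻²)` in `C^∞`-topology on `V`. Then `b_k(x) := B_k(x, φ_k(x))` satisfies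
`b_k = b₀ + O(k⁻¹)` in `C^∞`-topology on `U`, where `b₀(x) = ∫_{δ₁}^{δ₂} a₀(x,0,t) dt`. -/
theorem stmt5 {n : ℕ} (hn : 1 ≤ n)
    (U V : Set (Fin n → ℝ)) (hUopen : IsOpen U) (hVopen : IsOpen V)
    (hUcpt : IsCompact (closure U)) (hUV : closure U ⊆ V)
    (c δ₁ δ₂ : ℝ) (hc : 0 < c) (hδ₁ : 0 < δ₁) (hδ : δ₁ < δ₂)
    (τ : (Fin n → ℝ) → ℝ → ℂ)
    (a₀ : (Fin n → ℝ) → ℝ → ℝ → ℂ)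
    (a₁ : (Fin n → ℝ) → ℝ → ℝ → ℝ → ℂ)
    (hτ0 : ∀ x ∈ V, τ x 0 = 0)
    (hτre : ∀ x ∈ V, ∀ s ∈ Ico (0:ℝ) (2*c), 0 ≤ (τ x s).re)
    (hτsmooth : ContDiffOn ℝ (⊤ : ℕ∞) (fun p : (Fin n → ℝ) × ℝ => τ p.1 p.2)
      (V ×ˢ Ico 0 (2*c)))
    (ha₀smooth : ContDiffOn ℝ (⊤ : ℕ∞)
      (fun p : (Fin n → ℝ) × ℝ × ℝ => a₀ p.1 p.2.1 p.2.2)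
      (V ×ˢ Ico 0 (2*c) ×ˢ univ))
    (ha₁smooth : ∀ k : ℝ, 0 < k → ContDiffOn ℝ (⊤ : ℕ∞)
      (fun p : (Fin n → ℝ) × ℝ × ℝ => a₁ p.1 p.2.1 p.2.2 k)
      (V ×ˢ Ico 0 (2*c) ×ˢ univ))
    (ha₁O : ∀ K ⊆ (V ×ˢ Ico (0:ℝ) (2*c) ×ˢ (univ : Set ℝ)), IsCompact K →
      ∀ m : ℕ, ∃ C > (0:ℝ), ∀ i ≤ m, ∀ p ∈ K, ∀ k : ℝ, 1 ≤ k →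
        ‖iteratedFDerivWithin ℝ i
          (fun q : (Fin n → ℝ) × ℝ × ℝ => a₁ q.1 q.2.1 q.2.2 k)
          (V ×ˢ Ico 0 (2*c) ×ˢ univ) p‖ ≤ C / k)
    (B : ℝ → (Fin n → ℝ) → ℝ → ℂ)
    (hB : ∀ k x s, B k x s =
      ∫ t in δ₁..δ₂, Complex.exp (-((k : ℂ) * (t : ℂ)) * τ x s)
        * (a₀ x s t + a₁ x s t k))
    (k₀ : ℝ) (hk₀ : 0 < k₀)
    (φ : ℝ → (Fin n → ℝ) → ℝ)
    (hφsmooth : ∀ k ≥ k₀, ContDiffOn ℝ (⊤ : ℕ∞) (φ k) V)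
    (hφrange : ∀ k ≥ k₀, ∀ x ∈ V, φ k x ∈ Ioo 0 c)
    (hφO : ∀ K ⊆ V, IsCompact K → ∀ m : ℕ, ∃ C > (0:ℝ), ∀ i ≤ m, ∀ x ∈ K,
      ∀ k ≥ k₀, ‖iteratedFDeriv ℝ i (φ k) x‖ ≤ C / k^2) :
    ∀ K ⊆ U, IsCompact K → ∀ m : ℕ, ∃ C' > (0:ℝ), ∃ k₁ ≥ k₀,
      ∀ i ≤ m, ∀ x ∈ K, ∀ k ≥ k₁,
        ‖iteratedFDeriv ℝ i
          (fun y => B k y (φ k y) - ∫ t in δ₁..δ₂, a₀ y 0 t) x‖ ≤ C' / k := by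
  intro K hKU hKc m
  have hone : ∀ {ι : Type} (k : ι), (0:ℝ) ≤ (fun _ : ι => (1:ℝ)) k := fun _ => zero_le_one
  have hKV : K ⊆ V := (hKU.trans subset_closure).trans hUV
  let k₁ : ℝ := max k₀ 1
  let ι : Type := {k : ℝ // k₁ ≤ k}
  have hk0 : ∀ k : ι, k₀ ≤ k.1 := fun k => (le_max_left _ _).trans k.2
  have hk1 : ∀ k : ι, 1 ≤ k.1 := fun k => (le_max_right _ _).trans k.2
  have hkp : ∀ k : ι, 0 < k.1 := fun k => zero_lt_one.trans_le (hk1 k)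
  let r : ι → ℝ := fun k => 1 / k.1
  let r2 : ι → ℝ := fun k => 1 / k.1 ^ 2
  have hr : ∀ k, 0 ≤ r k := fun k => by have := hkp k; positivity
  have hr2 : ∀ k, 0 ≤ r2 k := fun k => by have := hkp k; positivity
  have hr1 : ∀ k, r k ≤ 1 := fun k => by
    exact (div_le_one (hkp k)).2 (hk1 k)
  have hr2r : ∀ k, r2 k ≤ r k := fun k => by
    have h1 := hkp k
    have h2 := hk1 k
    exact one_div_le_one_div_of_le h1 (by nlinarith)
  let W : Set ((Fin n → ℝ) × ℝ) := V ×ˢ univ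
  let Z : Set ((Fin n → ℝ) × ℝ × ℝ) := V ×ˢ Ico 0 (2*c) ×ˢ univ
  have hWo : IsOpen W := hVopen.prod isOpen_univ
  have hW : UniqueDiffOn ℝ W := hWo.uniqueDiffOn
  have hV : UniqueDiffOn ℝ V := hVopen.uniqueDiffOn
  have hZ : UniqueDiffOn ℝ Z :=
    hV.prod ((uniqueDiffOn_Ico 0 (2*c)).prod uniqueDiffOn_univ)
  have hφ : OO V r2 (m+1) (fun k : ι => φ k.1) := by
    refine OO.of_bounds hV (fun k => hφsmooth k.1 (hk0 k)) fun K hK hKc => ?_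
    obtain ⟨C, hC, h⟩ := hφO K hK hKc (m+1)
    refine ⟨C, hC.le, fun i hi x hx k => ?_⟩
    rw [iteratedFDerivWithin_of_isOpen i hVopen (hK hx)]
    have := h i hi x hx k.1 (hk0 k)
    simpa [r2, div_eq_mul_inv] using this
  have hφW : OO W r2 (m+1) (fun (k : ι) (p : (Fin n → ℝ) × ℝ) => φ k.1 p.1) := by
    refine OO.comp (Φ := fun _ p => p.1) (g := fun k : ι => φ k.1) hW hr2 ?_
      (OO.of_contDiffOn hW contDiff_fst.contDiffOn _) hφ
    intro K hK hKc
    refine ⟨Prod.fst '' K, ?_, hKc.image continuous_fst, fun k x hx => mem_image_of_mem _ hx⟩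
    rintro _ ⟨p, hp, rfl⟩
    exact (hK hp).1
  let Ψ : ι → (Fin n → ℝ) × ℝ → (Fin n → ℝ) × ℝ × ℝ := fun _ p => (p.1, 0, p.2)
  let Φ : ι → (Fin n → ℝ) × ℝ → (Fin n → ℝ) × ℝ × ℝ := fun k p => (p.1, φ k.1 p.1, p.2)
  have hΨ : OO W (fun _ => 1) (m+1) Ψ :=
    OO.of_contDiffOn hW (ContDiff.contDiffOn (by fun_prop)) _
  have hd : OO W r2 (m+1) (fun k p => Φ k p - Ψ k p) := by
    refine (hφW.clm hW ((ContinuousLinearMap.inr ℝ (Fin n → ℝ) (ℝ × ℝ)).comp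
      (ContinuousLinearMap.inl ℝ ℝ ℝ))).congr fun k p hp => ?_
    simp [Φ, Ψ]
  have hΦ : OO W (fun _ => 1) (m+1) Φ := by
    refine (hΨ.add hW (hd.mono fun k => (hr2r k).trans (hr1 k))).congr fun k p hp => ?_
    simp
  have hseg : ∀ K ⊆ W, IsCompact K → ∃ K' ⊆ Z, IsCompact K' ∧ ∀ k, ∀ x ∈ K,
      segment ℝ (Ψ k x) (Φ k x) ⊆ K' := by
    intro K hK hKc
    refine ⟨(Prod.fst '' K) ×ˢ Icc 0 c ×ˢ (Prod.snd '' K), ?_,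
      (hKc.image continuous_fst).prod (isCompact_Icc.prod (hKc.image continuous_snd)), ?_⟩
    · rintro ⟨x, s, t⟩ ⟨⟨p, hp, hpx⟩, hs, -⟩
      have h1 : 0 ≤ s := hs.1
      have h2 : s ≤ c := hs.2
      refine ⟨?_, ⟨h1, ?_⟩, trivial⟩
      · exact hpx ▸ (hK hp).1
      · show s < 2 * c
        linarith
    · rintro k ⟨x, t⟩ hp y ⟨α, β, hα, hβ, hαβ, rfl⟩
      have h1 := hφrange k.1 (hk0 k) x (hK hp).1
      have e : α • Ψ k (x, t) + β • Φ k (x, t) = (x, β * φ k.1 x, t) := by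
        have e1 : α • x + β • x = x := by rw [← add_smul, hαβ, one_smul]
        have e2 : α * t + β * t = t := by rw [← add_mul, hαβ, one_mul]
        simp [Ψ, Φ, e1, e2]
      rw [e]
      refine ⟨⟨_, hp, rfl⟩, ⟨mul_nonneg hβ h1.1.le, ?_⟩, ⟨_, hp, rfl⟩⟩
      show β * φ k.1 x ≤ c
      have : β ≤ 1 := by linarith
      nlinarith [h1.1, h1.2]
  have hmap : ∀ K ⊆ W, IsCompact K → ∃ K' ⊆ Z, IsCompact K' ∧ ∀ k, ∀ x ∈ K, Φ k x ∈ K' := by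
    intro K hK hKc
    obtain ⟨K', h1, h2, h3⟩ := hseg K hK hKc
    exact ⟨K', h1, h2, fun k x hx => h3 k x hx (right_mem_segment _ _ _)⟩
  have hA0 := OO.comp hW hone hmap hΦ (OO.of_contDiffOn (ι := ι) hZ ha₀smooth (m+1))
  have hA0d := (OO.comp_sub hW hZ hr2 hseg hΦ hΨ hd ha₀smooth).mono hr2r
  have hA1' : OO Z r (m+1) (fun (k : ι) (p : (Fin n → ℝ) × ℝ × ℝ) => a₁ p.1 p.2.1 p.2.2 k.1) := by
    refine OO.of_bounds hZ (fun k => ha₁smooth k.1 (hkp k)) fun K hK hKc => ?_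
    obtain ⟨C, hC, h⟩ := ha₁O K hK hKc (m+1)
    refine ⟨C, hC.le, fun i hi x hx k => ?_⟩
    have := h i hi x hx k.1 (hk1 k)
    simpa [r, div_eq_mul_inv] using this
  have hA1 := OO.comp hW hr hmap hΦ hA1'
  have hτZ : ContDiffOn ℝ (⊤ : ℕ∞) (fun p : (Fin n → ℝ) × ℝ × ℝ => τ p.1 p.2.1) Z := by
    refine hτsmooth.comp (f := fun p : (Fin n → ℝ) × ℝ × ℝ => (p.1, p.2.1))
      (ContDiff.contDiffOn (by fun_prop)) ?_
    rintro ⟨x, s, t⟩ ⟨h1, h2, -⟩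
    exact ⟨h1, h2⟩
  have hτd := OO.comp_sub hW hZ hr2 hseg hΦ hΨ hd hτZ
  have ht : OO W (fun _ : ι => (1:ℝ)) (m+1) (fun _ p => p.2) :=
    OO.of_contDiffOn hW contDiff_snd.contDiffOn _
  have htτ := OO.bilin hW (ContinuousLinearMap.lsmul ℝ ℝ) hone ht hτd
  have hz := (htτ.scale hW (fun k : ι => -k.1)).mono (r' := r) (fun k => by
    have := hkp k
    simp only [r, r2, one_mul, abs_neg, abs_of_pos this]
    apply le_of_eq
    field_simp)
  let z : ι → (Fin n → ℝ) × ℝ → ℂ := fun k p => -((k.1 : ℂ) * (p.2 : ℂ)) * τ p.1 (φ k.1 p.1)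
  have hz' : OO W r (m+1) z := by
    refine hz.congr fun k p hp => ?_
    simp [z, Φ, Ψ, hτ0 p.1 hp.1]
    ring
  have h0 : OO W (fun _ => 1) (m+1) (fun (_ : ι) (_ : (Fin n → ℝ) × ℝ) => (0:ℂ)) :=
    OO.of_contDiffOn hW contDiffOn_const _
  have hexp : OO W r (m+1) (fun k p => Complex.exp (z k p) - Complex.exp 0) := by
    refine OO.comp_sub (Z := univ) hW uniqueDiffOn_univ hr ?_ (hz'.mono hr1) h0
      (hz'.congr fun k p hp => by simp) (g := Complex.exp) (ContDiff.contDiffOn (by fun_prop))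
    intro K hK hKc
    obtain ⟨C, hC, h⟩ := hz'.bd K hK hKc
    refine ⟨Metric.closedBall 0 C, subset_univ _, isCompact_closedBall _ _, fun k x hx => ?_⟩
    refine (convex_closedBall _ _).segment_subset (by simpa using hC) ?_
    rw [mem_closedBall_zero_iff]
    exact (h k x hx).trans (mul_le_of_le_one_right hC (hr1 k))
  have hprod := OO.bilin hW (ContinuousLinearMap.mul ℝ ℂ) hr hexp
    (hA0.add hW (hA1.mono hr1))
  simp only [mul_one] at hprod
  have hall := (hprod.add hW hA0d).add hW hA1
  have hint := OO.integral hVopen hδ.le hall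
  have hcont0 : ∀ x ∈ V, ∀ s ∈ Ico (0:ℝ) (2*c), Continuous (fun t => a₀ x s t) := by
    intro x hx s hs
    exact ha₀smooth.continuousOn.comp_continuous (f := fun t : ℝ => (x, s, t)) (by fun_prop)
      (fun t => ⟨hx, hs, trivial⟩)
  have hcont1 : ∀ k : ι, ∀ x ∈ V, ∀ s ∈ Ico (0:ℝ) (2*c), Continuous (fun t => a₁ x s t k.1) := by
    intro k x hx s hs
    exact (ha₁smooth k.1 (hkp k)).continuousOn.comp_continuous (f := fun t : ℝ => (x, s, t))
      (by fun_prop) (fun t => ⟨hx, hs, trivial⟩)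
  have hfin : OO V r m (fun (k : ι) y => B k.1 y (φ k.1 y) - ∫ t in δ₁..δ₂, a₀ y 0 t) := by
    refine hint.congr fun k x hx => ?_
    have hs := hφrange k.1 (hk0 k) x hx
    have hs' : φ k.1 x ∈ Ico (0:ℝ) (2*c) := ⟨hs.1.le, by linarith [hs.2]⟩
    have c0 := hcont0 x hx _ hs'
    have c1 := hcont1 k x hx _ hs'
    have c2 := hcont0 x hx 0 ⟨le_rfl, by linarith⟩
    rw [hB, ← intervalIntegral.integral_sub]
    · refine intervalIntegral.integral_congr fun t _ => ?_
      simp [z, Φ, Ψ]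
      ring
    · exact Continuous.intervalIntegrable (by fun_prop) _ _
    · exact c2.intervalIntegrable _ _
  obtain ⟨C, hC, h⟩ := hfin.bounds hV hr K hKV hKc
  refine ⟨C + 1, by linarith, k₁, le_max_left _ _, fun i hi x hx k hk => ?_⟩
  have := h i hi x hx ⟨k, hk⟩
  rw [iteratedFDerivWithin_of_isOpen i hVopen (hKV hx)] at this
  refine this.trans ?_
  have hkk : 0 < k := hkp ⟨k, hk⟩
  simp only [r, mul_one_div]
  gcongr
  linarith
end
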